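/- arXiv:math/0607502 — 10 statements merged into one kernel-verified Lean document; each statement's English description precedes it below -/
import Mathlib

section
/- For all points z = (z₁,z₂) and ζ = (ζ₁,ζ₂) in ℂ², one has ‖z−ζ‖·‖z+ζ‖ ≤ 2‖π₂(z)−π₂(ζ)‖. -/
open Complex

noncomputable section

/-- The point `(a, b, c)` of `ℂ³` with the Euclidean (Hermitian) norm. -/
def mk3 (a b c : ℂ) : EuclideanSpace ℂ (Fin 3) :=
  (WithLp.equiv 2 (Fin 3 → ℂ)).symm ![a, b, c]

/-- `π₂(z₁, z₂) = (z₁², z₂², z₁z₂)`. -/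
def pi2 (z : EuclideanSpace ℂ (Fin 2)) : EuclideanSpace ℂ (Fin 3) :=
  mk3 (z 0 ^ 2) (z 1 ^ 2) (z 0 * z 1)

/-- For all `z, ζ ∈ ℂ²`, `‖z−ζ‖·‖z+ζ‖ ≤ 2‖π₂(z)−π₂(ζ)‖`. -/
theorem stmt0 (z ζ : EuclideanSpace ℂ (Fin 2)) :
    ‖z - ζ‖ * ‖z + ζ‖ ≤ 2 * ‖pi2 z - pi2 ζ‖ := by
  have key : (‖z - ζ‖ * ‖z + ζ‖) ^ 2 ≤ (2 * ‖pi2 z - pi2 ζ‖) ^ 2 := by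
    rw [mul_pow, mul_pow]
    simp only [EuclideanSpace.norm_sq_eq, Fin.sum_univ_two, Fin.sum_univ_three, pi2, mk3]
    simp only [PiLp.sub_apply, PiLp.add_apply, WithLp.equiv_symm_apply, Matrix.cons_val]
    generalize z 0 = a
    generalize z 1 = b
    generalize ζ 0 = c
    generalize ζ 1 = d
    obtain ⟨u, rfl⟩ : ∃ u, a = u + c := ⟨a - c, by ring⟩
    obtain ⟨v, rfl⟩ : ∃ v, b = v + d := ⟨b - d, by ring⟩
    obtain ⟨s, rfl⟩ : ∃ s, c = (s - u) / 2 := ⟨u + 2 * c, by ring⟩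
    obtain ⟨t, rfl⟩ : ∃ t, d = (t - v) / 2 := ⟨v + 2 * d, by ring⟩
    have e1 : u + (s - u) / 2 - (s - u) / 2 = u := by ring
    have e2 : v + (t - v) / 2 - (t - v) / 2 = v := by ring
    have e3 : u + (s - u) / 2 + (s - u) / 2 = s := by ring
    have e4 : v + (t - v) / 2 + (t - v) / 2 = t := by ring
    have e5 : (u + (s - u) / 2) ^ 2 - ((s - u) / 2) ^ 2 = u * s := by ring
    have e6 : (v + (t - v) / 2) ^ 2 - ((t - v) / 2) ^ 2 = v * t := by ring
    have e7 : (u + (s - u) / 2) * (v + (t - v) / 2) - (s - u) / 2 * ((t - v) / 2)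
        = (u * t + v * s) / 2 := by ring
    rw [e1, e2, e3, e4, e5, e6, e7, norm_div, div_pow, Complex.norm_ofNat]
    simp only [Complex.sq_norm, Complex.normSq_apply, Complex.mul_re, Complex.mul_im,
      Complex.add_re, Complex.add_im]
    nlinarith [sq_nonneg (u.re * s.re + u.im * s.im + (v.re * t.re + v.im * t.im)),
      sq_nonneg (u.im * s.re - u.re * s.im + (v.im * t.re - v.re * t.im)),
      sq_nonneg (u.re * s.re + u.im * s.im), sq_nonneg (v.re * t.re + v.im * t.im),
      sq_nonneg (u.im * s.re - u.re * s.im), sq_nonneg (v.im * t.re - v.re * t.im)]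
  exact (sq_le_sq₀ (by positivity) (by positivity)).1 key
end
end

section
/- Given two points z and ζ in ℂ² such that ‖z−ζ‖ ≤ ‖z+ζ‖, the inequality 2‖π₂(z)−π₂(ζ)‖ ≥ ‖z−ζ‖·max{‖z‖, ‖ζ‖, ‖z−ζ‖} holds. -/
open Complex

noncomputable section

theorem aux_core (u1 u2 v1 v2 : ℂ) :
    (‖u1‖ ^ 2 + ‖u2‖ ^ 2) * (‖v1‖ ^ 2 + ‖v2‖ ^ 2) ≤
      4 * (‖u1 * v1‖ ^ 2 + ‖u2 * v2‖ ^ 2 + ‖(u1 * v2 + u2 * v1) / 2‖ ^ 2) := by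
  have e : ‖(u1 * v2 + u2 * v1) / 2‖ ^ 2 = ‖u1 * v2 + u2 * v1‖ ^ 2 / 4 := by
    rw [norm_div, div_pow]; norm_num
  rw [e]
  have h1 := sq_nonneg ‖u1 * (starRingEnd ℂ) v1 + u2 * (starRingEnd ℂ) v2‖
  have h2 := sq_nonneg ‖u1 * v1‖
  have h3 := sq_nonneg ‖u2 * v2‖
  simp only [Complex.sq_norm, Complex.normSq_apply, Complex.add_re, Complex.add_im,
    Complex.mul_re, Complex.mul_im, Complex.conj_re, Complex.conj_im] at *
  nlinarith [h1, h2, h3]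

/-- If `‖z−ζ‖ ≤ ‖z+ζ‖`, then `2‖π₂(z)−π₂(ζ)‖ ≥ ‖z−ζ‖·max{‖z‖, ‖ζ‖, ‖z−ζ‖}`. -/
theorem stmt1 (z ζ : EuclideanSpace ℂ (Fin 2)) (h : ‖z - ζ‖ ≤ ‖z + ζ‖) :
    2 * ‖pi2 z - pi2 ζ‖ ≥ ‖z - ζ‖ * max (max ‖z‖ ‖ζ‖) ‖z - ζ‖ := by
  have key : (‖z - ζ‖ * ‖z + ζ‖) ^ 2 ≤ (2 * ‖pi2 z - pi2 ζ‖) ^ 2 := by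
    have := aux_core (z 0 - ζ 0) (z 1 - ζ 1) (z 0 + ζ 0) (z 1 + ζ 1)
    rw [mul_pow, mul_pow, EuclideanSpace.norm_sq_eq, EuclideanSpace.norm_sq_eq,
      EuclideanSpace.norm_sq_eq]
    simp only [Fin.sum_univ_two, Fin.sum_univ_three, pi2, mk3, PiLp.sub_apply, PiLp.add_apply]
    have e1 : (z 0 - ζ 0) * (z 0 + ζ 0) = z 0 ^ 2 - ζ 0 ^ 2 := by ring
    have e2 : (z 1 - ζ 1) * (z 1 + ζ 1) = z 1 ^ 2 - ζ 1 ^ 2 := by ring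
    have e3 : ((z 0 - ζ 0) * (z 1 + ζ 1) + (z 1 - ζ 1) * (z 0 + ζ 0)) / 2
      = z 0 * z 1 - ζ 0 * ζ 1 := by ring
    rw [e1, e2, e3] at this
    norm_num
    exact this
  have key2 := abs_le_of_sq_le_sq' key (by positivity)
  have hz : ‖z‖ ≤ ‖z + ζ‖ := by
    have h1 : ‖(2 : ℂ) • z‖ ≤ ‖z + ζ‖ + ‖z - ζ‖ := by
      have : (2 : ℂ) • z = (z + ζ) + (z - ζ) := by rw [two_smul]; abel
      rw [this]; exact norm_add_le _ _
    rw [norm_smul] at h1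
    norm_num at h1
    linarith
  have hw : ‖ζ‖ ≤ ‖z + ζ‖ := by
    have h1 : ‖(2 : ℂ) • ζ‖ ≤ ‖z + ζ‖ + ‖z - ζ‖ := by
      have : (2 : ℂ) • ζ = (z + ζ) - (z - ζ) := by rw [two_smul]; abel
      rw [this]; exact norm_sub_le _ _
    rw [norm_smul] at h1
    norm_num at h1
    linarith
  exact (mul_le_mul_of_nonneg_left (max_le (max_le hz hw) h) (norm_nonneg _)).trans key2.2
end
end

section
/- Let N ≥ 2 be a natural number and let z, ζ ∈ ℂ² be such that ‖z−φ_k(ζ)‖_∞ ≥ ‖z−ζ‖_∞ for every k = 1, …, N. Then ‖π_N(z)−π_N(ζ)‖ ≥ min{ ‖z−ζ‖_∞²/12 , ‖z−ζ‖_∞^N/2^N }. -/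
open Complex

noncomputable section

/-- The point `(a, b)` of `ℂ²` with the Euclidean (Hermitian) norm. -/
def mk2 (a b : ℂ) : EuclideanSpace ℂ (Fin 2) :=
  (WithLp.equiv 2 (Fin 2 → ℂ)).symm ![a, b]

/-- `π_N(z₁, z₂) = (z₁^N, z₂^N, z₁z₂)`. -/
def piN (N : ℕ) (z : EuclideanSpace ℂ (Fin 2)) : EuclideanSpace ℂ (Fin 3) :=
  mk3 (z 0 ^ N) (z 1 ^ N) (z 0 * z 1)

/-- `ρ_N = e^{2πi/N}`. -/
def rhoN (N : ℕ) : ℂ := Complex.exp (2 * Real.pi * Complex.I / N)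

/-- `φ_k(z₁, z₂) = (ρ_N^k z₁, ρ_N^{−k} z₂)`. -/
def phiN (N k : ℕ) (z : EuclideanSpace ℂ (Fin 2)) : EuclideanSpace ℂ (Fin 2) :=
  mk2 (rhoN N ^ k * z 0) (rhoN N ^ (-(k : ℤ)) * z 1)

/-- `‖z − ζ‖_∞ = max(|z₁−ζ₁|, |z₂−ζ₂|)`. -/
def supDist (z ζ : EuclideanSpace ℂ (Fin 2)) : ℝ :=
  max ‖z 0 - ζ 0‖ ‖z 1 - ζ 1‖

/-- If all `‖x - μ y‖` (`μ` an `N`-th root of unity) are at least `c`, then `‖x^N - y^N‖ ≥ c^N`. -/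
theorem pow_sub_lower (N : ℕ) (hN : 2 ≤ N) (x y : ℂ) (c : ℝ) (hc : 0 ≤ c)
    (h : ∀ μ : ℂ, μ ^ N = 1 → c ≤ ‖x - μ * y‖) : c ^ N ≤ ‖x ^ N - y ^ N‖ := by
  have hp : IsPrimitiveRoot (rhoN N) N := Complex.isPrimitiveRoot_exp N (by omega)
  rw [hp.pow_sub_pow_eq_prod_sub_mul x y (by omega), norm_prod]
  calc c ^ N = ∏ _μ ∈ Polynomial.nthRootsFinset N (1 : ℂ), c := by
        rw [Finset.prod_const, hp.card_nthRootsFinset]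
    _ ≤ _ := Finset.prod_le_prod (fun _ _ => hc) (fun μ hμ => h μ
        ((Polynomial.mem_nthRootsFinset (by omega) _).1 hμ))

/-- The Euclidean norm of a point of `ℂ³` dominates each coordinate. -/
theorem coord_le (v : EuclideanSpace ℂ (Fin 3)) (i : Fin 3) : ‖v i‖ ≤ ‖v‖ :=
  PiLp.norm_apply_le v i

/-- If `‖z−φ_k(ζ)‖_∞ ≥ ‖z−ζ‖_∞` for every `k = 1, …, N`, then
`‖π_N(z)−π_N(ζ)‖ ≥ min{‖z−ζ‖_∞²/12, ‖z−ζ‖_∞^N/2^N}`. -/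
theorem stmt2 (N : ℕ) (hN : 2 ≤ N) (z ζ : EuclideanSpace ℂ (Fin 2))
    (h : ∀ k : ℕ, 1 ≤ k → k ≤ N → supDist z (phiN N k ζ) ≥ supDist z ζ) :
    ‖piN N z - piN N ζ‖ ≥ min (supDist z ζ ^ 2 / 12) (supDist z ζ ^ N / 2 ^ N) := by
  have hp : IsPrimitiveRoot (rhoN N) N := Complex.isPrimitiveRoot_exp N (by omega)
  have h0 : ‖z 0 ^ N - ζ 0 ^ N‖ ≤ ‖piN N z - piN N ζ‖ := by
    simpa [piN, mk3] using coord_le (piN N z - piN N ζ) 0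
  have h1 : ‖z 1 ^ N - ζ 1 ^ N‖ ≤ ‖piN N z - piN N ζ‖ := by
    simpa [piN, mk3] using coord_le (piN N z - piN N ζ) 1
  have h2 : ‖z 0 * z 1 - ζ 0 * ζ 1‖ ≤ ‖piN N z - piN N ζ‖ := by
    simpa [piN, mk3] using coord_le (piN N z - piN N ζ) 2
  have hd : 0 ≤ supDist z ζ := le_max_of_le_left (norm_nonneg _)
  have H : ∀ μ : ℂ, μ ^ N = 1 →
      supDist z ζ ≤ max ‖z 0 - μ * ζ 0‖ ‖z 1 - μ⁻¹ * ζ 1‖ := by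
    intro μ hμ
    have : NeZero N := ⟨by omega⟩
    obtain ⟨i, hi, rfl⟩ := hp.eq_pow_of_pow_eq_one hμ
    rcases Nat.eq_zero_or_pos i with rfl | hi0
    · simp [supDist]
    · simpa [supDist, phiN, mk2, zpow_neg] using h i hi0 hi.le
  generalize supDist z ζ = d at *
  by_cases hA : ∀ μ : ℂ, μ ^ N = 1 → d / 2 ≤ ‖z 0 - μ * ζ 0‖
  · have := pow_sub_lower N hN _ _ _ (by positivity) hA
    rw [div_pow] at this
    exact (min_le_right _ _).trans (this.trans h0)
  by_cases hB : ∀ μ : ℂ, μ ^ N = 1 → d / 2 ≤ ‖z 1 - μ * ζ 1‖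
  · have := pow_sub_lower N hN _ _ _ (by positivity) hB
    rw [div_pow] at this
    exact (min_le_right _ _).trans (this.trans h1)
  push Not at hA hB
  obtain ⟨r, hr, hu⟩ := hA
  obtain ⟨w', hw', hs⟩ := hB
  obtain ⟨w, rfl⟩ : ∃ w, w' = w⁻¹ := ⟨w'⁻¹, (inv_inv _).symm⟩
  have hw : w ^ N = 1 := by simpa using hw'
  have hrn : ‖r‖ = 1 := Complex.norm_eq_one_of_pow_eq_one hr (by omega)
  have hwn : ‖w‖ = 1 := Complex.norm_eq_one_of_pow_eq_one hw (by omega)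
  have hr0 : r ≠ 0 := by rintro rfl; simp at hrn
  have hw0 : w ≠ 0 := by rintro rfl; simp at hwn
  have ht : d ≤ ‖z 1 - r⁻¹ * ζ 1‖ := by
    rcases le_max_iff.1 (H r hr) with h' | h'
    · linarith
    · exact h'
  have hv : d ≤ ‖z 0 - w * ζ 0‖ := by
    rcases le_max_iff.1 (H w hw) with h' | h'
    · exact h'
    · linarith
  have key : (r - w) * (z 0 * z 1 - ζ 0 * ζ 1) =
      r * ((z 0 - w * ζ 0) * (z 1 - r⁻¹ * ζ 1)) -
        w * ((z 0 - r * ζ 0) * (z 1 - w⁻¹ * ζ 1)) := by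
    field_simp
    ring
  have k1 := norm_sub_norm_le (r * ((z 0 - w * ζ 0) * (z 1 - r⁻¹ * ζ 1)))
    (w * ((z 0 - r * ζ 0) * (z 1 - w⁻¹ * ζ 1)))
  rw [← key] at k1
  simp only [norm_mul, hrn, hwn, one_mul] at k1
  have k2 : ‖r - w‖ ≤ 2 := (norm_sub_le r w).trans (by rw [hrn, hwn]; norm_num)
  have k3 := mul_le_mul_of_nonneg_right k2 (norm_nonneg (z 0 * z 1 - ζ 0 * ζ 1))
  have k4 := mul_le_mul hv ht hd (norm_nonneg _)
  have k5 := mul_le_mul hu.le hs.le (norm_nonneg _) (by positivity)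
  simp only [norm_mul] at k3
  refine (min_le_left _ _).trans (le_trans ?_ h2)
  nlinarith [sq_nonneg d]
end
end

section
/- Let N ≥ 2 be a natural number, let δ = Ev(N)/2, and let z, ζ ∈ ℂ² be such that ‖z−φ_k(ζ)‖_∞ ≥ ‖z−ζ‖_∞ for every k = 1, …, N. Then ‖π_N(z)−π_N(ζ)‖ ≥ min{ ‖z−ζ‖_∞²/12 , ‖z,ζ‖_∞^{N−δ}·‖z−ζ‖_∞^δ / ((8/3)^{N−δ}·2^δ) }. -/
open Complex

noncomputable section

/-- `‖z, ζ‖_∞ = max(|z₁|, |z₂|, |ζ₁|, |ζ₂|)`. -/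
def supPair (z ζ : EuclideanSpace ℂ (Fin 2)) : ℝ :=
  max (max ‖z 0‖ ‖z 1‖)
    (max ‖ζ 0‖ ‖ζ 1‖)

/-- `Ev(N)`: the smallest even integer greater than or equal to `N`. -/
def Ev (N : ℕ) : ℕ := if N % 2 = 0 then N else N + 1

theorem rho_prim (N : ℕ) (hN : 2 ≤ N) : IsPrimitiveRoot (rhoN N) N :=
  Complex.isPrimitiveRoot_exp N (by omega)

theorem pow_sub_prod (N : ℕ) (hN : 2 ≤ N) (a c : ℂ) :
    a ^ N - c ^ N = ∏ i ∈ Finset.range N, (a - rhoN N ^ i * c) := by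
  have hp := rho_prim N hN
  rw [hp.pow_sub_pow_eq_prod_sub_mul a c (by omega)]
  symm
  refine Finset.prod_bij (fun i _ => rhoN N ^ i) ?_ ?_ ?_ ?_
  · intro i _
    rw [Polynomial.mem_nthRootsFinset (by omega), ← pow_mul, mul_comm, pow_mul, hp.pow_eq_one,
      one_pow]
  · intro i hi j hj hij
    exact hp.pow_inj (Finset.mem_range.1 hi) (Finset.mem_range.1 hj) hij
  · intro u hu
    rw [Polynomial.mem_nthRootsFinset (by omega)] at hu
    have : NeZero N := ⟨by omega⟩
    obtain ⟨i, hi, h⟩ := hp.eq_pow_of_pow_eq_one hu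
    exact ⟨i, Finset.mem_range.2 hi, h⟩
  · intro i _
    rfl

theorem half_plane (N : ℕ) (hN : 2 ≤ N) (w : ℂ) :
    ∃ v : ℂ, v ^ N = 1 ∧ ∀ i < N / 2, (rhoN N ^ i * v * w).re ≤ 0 := by
  have hp := rho_prim N hN
  have hN0 : (0 : ℝ) < N := by exact_mod_cast (by omega : 0 < N)
  have hNC : (N : ℂ) ≠ 0 := by exact_mod_cast hN0.ne'
  have hpi := Real.pi_pos
  set θ := Complex.arg w
  set j : ℤ := ⌈(Real.pi / 2 - θ) * N / (2 * Real.pi)⌉ with hj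
  have h1 : (Real.pi / 2 - θ) * N / (2 * Real.pi) ≤ j := Int.le_ceil _
  have h2 : (j : ℝ) < (Real.pi / 2 - θ) * N / (2 * Real.pi) + 1 := Int.ceil_lt_add_one _
  refine ⟨rhoN N ^ j, ?_, ?_⟩
  · rw [← zpow_natCast, ← zpow_mul, mul_comm, zpow_mul, zpow_natCast, hp.pow_eq_one, one_zpow]
  · intro i hi
    have him : (2 * (i + 1) : ℝ) ≤ N := by exact_mod_cast (by omega : 2 * (i + 1) ≤ N)
    have hi0 : (0 : ℝ) ≤ i := by positivity
    have key : rhoN N ^ i * rhoN N ^ j * w =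
        (‖w‖ : ℂ) * Complex.exp ((θ + 2 * Real.pi * (j + i) / N : ℝ) * Complex.I) := by
      conv_lhs => rw [← Complex.norm_mul_exp_arg_mul_I w]
      unfold rhoN
      rw [← Complex.exp_nat_mul, ← Complex.exp_int_mul, ← Complex.exp_add, mul_left_comm,
        ← Complex.exp_add]
      congr 2
      push_cast
      field_simp
      ring
    rw [key, Complex.re_ofReal_mul, Complex.exp_ofReal_mul_I_re]
    apply mul_nonpos_of_nonneg_of_nonpos (norm_nonneg _)
    rw [div_le_iff₀ (by positivity)] at h1
    rw [← sub_lt_iff_lt_add, lt_div_iff₀ (by positivity)] at h2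
    have e : 2 * Real.pi * (j + i) / N * N = 2 * Real.pi * (j + i) := by field_simp
    set t := 2 * Real.pi * (j + i) / N
    apply Real.cos_nonpos_of_pi_div_two_le_of_le
    · have : (Real.pi / 2 - θ) * N ≤ t * N := by rw [e]; nlinarith
      linarith [le_of_mul_le_mul_right this hN0]
    · have : t * N ≤ (Real.pi / 2 + Real.pi - θ) * N := by rw [e]; nlinarith
      linarith [le_of_mul_le_mul_right this hN0]

theorem norm_ge_of_re (a x : ℂ) (h : (x * (starRingEnd ℂ) a).re ≤ 0) : ‖a‖ ≤ ‖a - x‖ := by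
  refine (sq_le_sq₀ (norm_nonneg _) (norm_nonneg _)).1 ?_
  rw [← Complex.normSq_eq_norm_sq, ← Complex.normSq_eq_norm_sq]
  simp only [Complex.normSq_apply, Complex.sub_re, Complex.sub_im]
  simp only [Complex.mul_re, Complex.conj_re, Complex.conj_im] at h
  nlinarith [sq_nonneg x.re, sq_nonneg x.im]

theorem core (N : ℕ) (hN : 2 ≤ N) (a b c e : ℂ) (d : ℝ) (hd : 0 ≤ d) (hda : d ≤ 2 * ‖a‖)
    (hea : ‖e‖ ≤ ‖a‖) (H : ∀ u : ℂ, u ^ N = 1 → d ≤ max ‖a - u * c‖ ‖b - u⁻¹ * e‖) :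
    d ^ 2 / 12 ≤ ‖a * b - c * e‖ ∨ ‖a‖ ^ (N / 2) * (d / 2) ^ (N - N / 2) ≤ ‖a ^ N - c ^ N‖ := by
  have hp := rho_prim N hN
  by_cases hs : ∃ u : ℂ, u ^ N = 1 ∧ ‖a - u * c‖ < d / 2
  · left
    obtain ⟨u, hu, hlt⟩ := hs
    have hu0 : u ≠ 0 := by
      rintro rfl
      rw [zero_pow (by omega)] at hu
      exact zero_ne_one hu
    have hun : ‖u‖ = 1 := Complex.norm_eq_one_of_pow_eq_one hu (by omega)
    have h1 : d ≤ ‖b - u⁻¹ * e‖ := by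
      rcases le_max_iff.1 (H u hu) with h | h
      · linarith
      · exact h
    have e1 : a * b - c * e = a * (b - u⁻¹ * e) - (-(a - u * c) * (u⁻¹ * e)) := by
      field_simp
      ring
    have h2 := norm_sub_norm_le (a * (b - u⁻¹ * e)) (-(a - u * c) * (u⁻¹ * e))
    rw [← e1, norm_mul, norm_mul, norm_neg, norm_mul, norm_inv, hun, inv_one, one_mul] at h2
    have h3 : ‖a‖ * d ≤ ‖a‖ * ‖b - u⁻¹ * e‖ := mul_le_mul_of_nonneg_left h1 (norm_nonneg _)
    have h4 : ‖a - u * c‖ * ‖e‖ ≤ d / 2 * ‖a‖ :=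
      mul_le_mul hlt.le hea (norm_nonneg _) (by linarith)
    nlinarith
  · right
    push Not at hs
    obtain ⟨v, hv, hre⟩ := half_plane N hN (c * (starRingEnd ℂ) a)
    have e1 : a ^ N - c ^ N = a ^ N - (v * c) ^ N := by rw [mul_pow, hv, one_mul]
    have e2 : N = N / 2 + (N - N / 2) := by omega
    have hprod : ‖a ^ N - c ^ N‖ = (∏ i ∈ Finset.range (N / 2), ‖a - rhoN N ^ i * (v * c)‖) *
        ∏ i ∈ Finset.range (N - N / 2), ‖a - rhoN N ^ (N / 2 + i) * (v * c)‖ := by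
      rw [e1, pow_sub_prod N hN, norm_prod, ← Finset.prod_range_add, ← e2]
    rw [hprod]
    refine mul_le_mul ?_ ?_ (by positivity) (by positivity)
    · have := Finset.prod_le_prod (s := Finset.range (N / 2)) (f := fun _ => ‖a‖)
        (g := fun i => ‖a - rhoN N ^ i * (v * c)‖) (fun _ _ => norm_nonneg _) (by
          intro i hi
          apply norm_ge_of_re
          have := hre i (Finset.mem_range.1 hi)
          convert this using 2
          ring)
      simpa using this
    · have := Finset.prod_le_prod (s := Finset.range (N - N / 2)) (f := fun _ => d / 2)
        (g := fun i => ‖a - rhoN N ^ (N / 2 + i) * (v * c)‖) (fun _ _ => by linarith) (by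
          intro i hi
          have := hs (rhoN N ^ (N / 2 + i) * v) (by
            rw [mul_pow, hv, mul_one, ← pow_mul, mul_comm, pow_mul, hp.pow_eq_one, one_pow])
          rwa [mul_assoc] at this)
      rwa [Finset.prod_const, Finset.card_range] at this

theorem norm_swap (u x y : ℂ) (hu : ‖u‖ = 1) : ‖x - u * y‖ = ‖y - u⁻¹ * x‖ := by
  have hu0 : u ≠ 0 := by
    rintro rfl
    simp at hu
  have : x - u * y = -u * (y - u⁻¹ * x) := by
    field_simp
    ring
  rw [this, norm_mul, norm_neg, hu, one_mul]

theorem norm_ge_coord (x : EuclideanSpace ℂ (Fin 3)) (i : Fin 3) : ‖x i‖ ≤ ‖x‖ :=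
  PiLp.norm_apply_le x i

/-- With `δ = Ev(N)/2`, if `‖z−φ_k(ζ)‖_∞ ≥ ‖z−ζ‖_∞` for every `k = 1, …, N`, then
`‖π_N(z)−π_N(ζ)‖ ≥ min{‖z−ζ‖_∞²/12, ‖z,ζ‖_∞^{N−δ}·‖z−ζ‖_∞^δ/((8/3)^{N−δ}·2^δ)}`. -/
theorem stmt3 (N : ℕ) (hN : 2 ≤ N) (z ζ : EuclideanSpace ℂ (Fin 2))
    (h : ∀ k : ℕ, 1 ≤ k → k ≤ N → supDist z (phiN N k ζ) ≥ supDist z ζ) :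
    ‖piN N z - piN N ζ‖ ≥
      min (supDist z ζ ^ 2 / 12)
        (supPair z ζ ^ (N - Ev N / 2) * supDist z ζ ^ (Ev N / 2) /
          (((8 : ℝ) / 3) ^ (N - Ev N / 2) * 2 ^ (Ev N / 2))) := by
  have hp := rho_prim N hN
  have : NeZero N := ⟨by omega⟩
  have hδ : Ev N / 2 = N - N / 2 := by
    unfold Ev
    split_ifs <;> omega
  have hdel : N - Ev N / 2 = N / 2 := by omega
  rw [hdel, hδ]
  have H : ∀ u : ℂ, u ^ N = 1 → supDist z ζ ≤ max ‖z 0 - u * ζ 0‖ ‖z 1 - u⁻¹ * ζ 1‖ := by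
    intro u hu
    obtain ⟨i, hi, rfl⟩ := hp.eq_pow_of_pow_eq_one hu
    rcases Nat.eq_zero_or_pos i with rfl | h0
    · simp [supDist]
    · have := h i h0 hi.le
      simpa [supDist, phiN, mk2] using this
  have c0 : ‖z 0 ^ N - ζ 0 ^ N‖ ≤ ‖piN N z - piN N ζ‖ := by
    simpa [piN, mk3] using norm_ge_coord (piN N z - piN N ζ) 0
  have c1 : ‖z 1 ^ N - ζ 1 ^ N‖ ≤ ‖piN N z - piN N ζ‖ := by
    simpa [piN, mk3] using norm_ge_coord (piN N z - piN N ζ) 1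
  have c2 : ‖z 0 * z 1 - ζ 0 * ζ 1‖ ≤ ‖piN N z - piN N ζ‖ := by
    simpa [piN, mk3] using norm_ge_coord (piN N z - piN N ζ) 2
  have hd : 0 ≤ supDist z ζ := le_max_of_le_left (norm_nonneg _)
  have m0 : ‖z 0‖ ≤ supPair z ζ := by simp [supPair]
  have m1 : ‖z 1‖ ≤ supPair z ζ := by simp [supPair]
  have m2 : ‖ζ 0‖ ≤ supPair z ζ := by simp [supPair]
  have m3 : ‖ζ 1‖ ≤ supPair z ζ := by simp [supPair]
  have hM : 0 ≤ supPair z ζ := (norm_nonneg _).trans m0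
  have hdM : supDist z ζ ≤ 2 * supPair z ζ := by
    apply max_le
    · linarith [norm_sub_le (z 0) (ζ 0)]
    · linarith [norm_sub_le (z 1) (ζ 1)]
  have hcase : supPair z ζ = ‖z 0‖ ∨ supPair z ζ = ‖z 1‖ ∨ supPair z ζ = ‖ζ 0‖ ∨
      supPair z ζ = ‖ζ 1‖ := by
    unfold supPair
    rcases max_choice (max ‖z 0‖ ‖z 1‖) (max ‖ζ 0‖ ‖ζ 1‖) with h | h <;> rw [h]
    · rcases max_choice ‖z 0‖ ‖z 1‖ with h | h <;> rw [h] <;> simp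
    · rcases max_choice ‖ζ 0‖ ‖ζ 1‖ with h | h <;> rw [h] <;> simp
  set M := supPair z ζ
  set d := supDist z ζ
  have fin : d ^ 2 / 12 ≤ ‖piN N z - piN N ζ‖ ∨
      M ^ (N / 2) * (d / 2) ^ (N - N / 2) ≤ ‖piN N z - piN N ζ‖ := by
    have hnorm : ∀ u : ℂ, u ^ N = 1 → ‖u‖ = 1 := fun u hu =>
      Complex.norm_eq_one_of_pow_eq_one hu (by omega)
    have hinv : ∀ u : ℂ, u ^ N = 1 → u⁻¹ ^ N = 1 := fun u hu => by rw [inv_pow, hu, inv_one]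
    rcases hcase with hc | hc | hc | hc
    · have := core N hN (z 0) (z 1) (ζ 0) (ζ 1) d hd (hc ▸ hdM) (hc ▸ m3) H
      rw [← hc] at this
      exact this.imp c2.trans' c0.trans'
    · have := core N hN (z 1) (z 0) (ζ 1) (ζ 0) d hd (hc ▸ hdM) (hc ▸ m2) (fun u hu => by
        have := H u⁻¹ (hinv u hu)
        rwa [inv_inv, max_comm] at this)
      rw [← hc, mul_comm (z 1), mul_comm (ζ 1)] at this
      exact this.imp c2.trans' c1.trans'
    · have := core N hN (ζ 0) (ζ 1) (z 0) (z 1) d hd (hc ▸ hdM) (hc ▸ m1) (fun u hu => by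
        have := H u⁻¹ (hinv u hu)
        rwa [norm_swap u⁻¹ (z 0) (ζ 0) (hnorm _ (hinv u hu)), inv_inv,
          norm_swap u (z 1) (ζ 1) (hnorm u hu)] at this)
      rw [← hc, norm_sub_rev, norm_sub_rev (ζ 0 ^ N)] at this
      exact this.imp c2.trans' c0.trans'
    · have := core N hN (ζ 1) (ζ 0) (z 1) (z 0) d hd (hc ▸ hdM) (hc ▸ m0) (fun u hu => by
        have := H u hu
        rwa [norm_swap u⁻¹ (z 1) (ζ 1) (hnorm _ (hinv u hu)), inv_inv,
          norm_swap u (z 0) (ζ 0) (hnorm u hu), max_comm] at this)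
      rw [← hc, norm_sub_rev, norm_sub_rev (ζ 1 ^ N), mul_comm (z 1), mul_comm (ζ 1)] at this
      exact this.imp c2.trans' c1.trans'
  rcases fin with h1 | h1
  · exact (min_le_left _ _).trans h1
  · refine (min_le_right _ _).trans (le_trans ?_ h1)
    rw [div_pow d, ← mul_div_assoc]
    apply div_le_div_of_nonneg_left (by positivity) (by positivity)
    have : (1 : ℝ) ≤ (8 / 3) ^ (N / 2) := one_le_pow₀ (by norm_num)
    nlinarith [show (0 : ℝ) < 2 ^ (N - N / 2) by positivity]
end
end

section
/- Let a, b, s, t be complex numbers and ω a complex number with |ω| = 1. Assume |a−s| ≥ |b−t|, |b| ≤ |s| + |a−s|/12, |a − ωs| ≤ |a−s|/2, and |ωb − t| ≥ |a−s|. Then |ab − st| ≥ |a−s|²/12. -/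
/-- If `|ω| = 1`, `|a−s| ≥ |b−t|`, `|b| ≤ |s| + |a−s|/12`, `|a − ωs| ≤ |a−s|/2` and
`|ωb − t| ≥ |a−s|`, then `|ab − st| ≥ |a−s|²/12`. -/
theorem stmt5 (a b s t ω : ℂ) (hω : ‖ω‖ = 1)
    (h1 : ‖a - s‖ ≥ ‖b - t‖)
    (h2 : ‖b‖ ≤ ‖s‖ + ‖a - s‖ / 12)
    (h3 : ‖a - ω * s‖ ≤ ‖a - s‖ / 2)
    (h4 : ‖ω * b - t‖ ≥ ‖a - s‖) :
    ‖a * b - s * t‖ ≥ ‖a - s‖ ^ 2 / 12 := by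
  have hs : ‖ω * s‖ = ‖s‖ := by rw [norm_mul, hω, one_mul]
  have e1 : ‖a - s‖ ≤ ‖a - ω * s‖ + (‖ω * s‖ + ‖s‖) := by
    calc ‖a - s‖ = ‖(a - ω * s) + (ω * s - s)‖ := by congr 1; ring
      _ ≤ ‖a - ω * s‖ + ‖ω * s - s‖ := norm_add_le _ _
      _ ≤ _ := by gcongr; exact norm_sub_le _ _
  have e2 : ‖s‖ * ‖ω * b - t‖ ≤ ‖a * b - s * t‖ + ‖a - ω * s‖ * ‖b‖ := by
    rw [← norm_mul, ← norm_mul]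
    calc ‖s * (ω * b - t)‖ = ‖(a * b - s * t) - (a - ω * s) * b‖ := by congr 1; ring
      _ ≤ _ := norm_sub_le _ _
  have e3 : ‖s‖ * ‖a - s‖ ≤ ‖s‖ * ‖ω * b - t‖ := by gcongr
  have e4 : ‖a - ω * s‖ * ‖b‖ ≤ (‖a - s‖ / 2) * (‖s‖ + ‖a - s‖ / 12) := by gcongr
  have e5 : ‖a - s‖ / 4 ≤ ‖s‖ := by linarith
  have e6 : ‖a - s‖ * (‖a - s‖ / 4) ≤ ‖a - s‖ * ‖s‖ := by gcongr
  nlinarith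
end

section
/- Let N ≥ 2 be a natural number and a, s complex numbers. Then there exists a subset J of {1, 2, …, N} with at least N − Ev(N)/2 elements such that |a − ρ_N^j·s|² ≥ |a|² + |s|² for every j ∈ J; in particular, |a − ρ_N^j·s| ≥ max{|a|, |s|, |a−s|/√2} for every j ∈ J. -/
noncomputable section

theorem le_of_sq_le_of_nn {x y : ℝ} (h : x ^ 2 ≤ y ^ 2) (hy : 0 ≤ y) : x ≤ y :=
  abs_le_of_sq_le_sq' h hy |>.2

theorem rhoN_pow_eq (N j : ℕ) :
    rhoN N ^ j = Complex.exp (((2 * Real.pi * j / N : ℝ) : ℂ) * Complex.I) := by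
  unfold rhoN
  rw [← Complex.exp_nat_mul]
  congr 1
  push_cast
  ring

theorem rhoN_norm_sq (N j : ℕ) (a s : ℂ) :
    ‖a - rhoN N ^ j * s‖ ^ 2 = ‖a‖ ^ 2 + ‖s‖ ^ 2 - 2 * (‖s * (starRingEnd ℂ) a‖ *
      Real.cos (Complex.arg (s * (starRingEnd ℂ) a) + 2 * Real.pi * j / N)) := by
  set c := s * (starRingEnd ℂ) a with hc
  set t : ℝ := 2 * Real.pi * j / N with ht
  have h1 : c.re = ‖c‖ * Real.cos c.arg := (Complex.norm_mul_cos_arg c).symm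
  have h2 : c.im = ‖c‖ * Real.sin c.arg := (Complex.norm_mul_sin_arg c).symm
  have h3 : ‖c‖ * Real.cos (c.arg + t) = c.re * Real.cos t - c.im * Real.sin t := by
    rw [Real.cos_add, h1, h2]; ring
  rw [h3, rhoN_pow_eq, ← ht, hc, Complex.sq_norm, Complex.sq_norm, Complex.sq_norm]
  simp only [Complex.normSq_apply, Complex.sub_re, Complex.sub_im, Complex.mul_re, Complex.mul_im,
    Complex.exp_ofReal_mul_I_re, Complex.exp_ofReal_mul_I_im, Complex.conj_re, Complex.conj_im]
  have := Real.sin_sq_add_cos_sq t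
  linear_combination (s.re ^ 2 + s.im ^ 2) * this

theorem cos_count (N : ℕ) (hN : 2 ≤ N) (θ : ℝ) :
    N / 2 ≤ ((Finset.Icc 1 N).filter
      (fun j : ℕ => Real.cos (θ + 2 * Real.pi * j / N) ≤ 0)).card := by
  have hNR : (0 : ℝ) < N := by positivity
  have hpi := Real.pi_pos
  set x : ℝ := N * (Real.pi / 2 - θ) / (2 * Real.pi) with hx
  set m : ℤ := ⌈x⌉ with hm
  have hm1 : x ≤ m := Int.le_ceil x
  have hm2 : (m : ℝ) < x + 1 := Int.ceil_lt_add_one x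
  have hNZ : (0 : ℤ) < N := by omega
  have key := Finset.card_le_card_of_injOn (s := Finset.range (N / 2))
    (t := (Finset.Icc 1 N).filter
      (fun j : ℕ => Real.cos (θ + 2 * Real.pi * j / N) ≤ 0))
    (fun k => ((m + k - 1) % (N : ℤ)).toNat + 1) ?_ ?_
  · simpa using key
  · intro k hk
    have hk : k < N / 2 := by simpa using hk
    have h0 := Int.emod_nonneg (m + k - 1) hNZ.ne'
    have h1 := Int.emod_lt_of_pos (m + k - 1) hNZ
    simp only [Finset.coe_filter, Set.mem_setOf_eq, Finset.mem_Icc]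
    refine ⟨⟨by omega, by omega⟩, ?_⟩
    set q := (m + k - 1) / (N : ℤ) with hq
    have h2 : ((((m + k - 1) % (N : ℤ)).toNat + 1 : ℕ) : ℤ) = m + k - N * q := by
      have := Int.emod_add_mul_ediv (m + k - 1) N
      push_cast
      rw [Int.toNat_of_nonneg h0]
      linarith
    have h3 : ((((m + k - 1) % (N : ℤ)).toNat + 1 : ℕ) : ℝ) = m + k - N * q := by
      exact_mod_cast h2
    rw [h3]
    have h4 : θ + 2 * Real.pi * (m + k - N * q) / N
        = θ + 2 * Real.pi * (m + k) / N - q * (2 * Real.pi) := by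
      field_simp
      ring
    rw [h4, Real.cos_sub_int_mul_two_pi]
    have hk' : ((k : ℝ) + 1) * 2 ≤ N := by
      have : (k + 1) * 2 ≤ N := by omega
      exact_mod_cast this
    have h5 : θ + 2 * Real.pi * x / N = Real.pi / 2 := by
      rw [hx]; field_simp; ring
    have hk0 : (0 : ℝ) ≤ k := by positivity
    apply Real.cos_nonpos_of_pi_div_two_le_of_le
    · rw [← h5]
      gcongr
      linarith
    · have : 2 * Real.pi * (m + k) / N ≤ 2 * Real.pi * (x + N / 2) / N := by
        have h7 : (m : ℝ) + k ≤ x + N / 2 := by linarith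
        exact div_le_div_of_nonneg_right (mul_le_mul_of_nonneg_left h7 (by positivity)) hNR.le
      have h6 : 2 * Real.pi * (x + N / 2) / N = 2 * Real.pi * x / N + Real.pi := by
        field_simp
      linarith
  · intro k hk l hl h
    have hk : k < N / 2 := by simpa using hk
    have hl : l < N / 2 := by simpa using hl
    have h0 := Int.emod_nonneg (m + k - 1) hNZ.ne'
    have h1 := Int.emod_nonneg (m + l - 1) hNZ.ne'
    have h2 : (m + k - 1) % (N : ℤ) = (m + l - 1) % (N : ℤ) := by
      simp only at h
      omega
    have h4 : (N : ℤ) ∣ (m + l - 1) - (m + k - 1) := Int.ModEq.dvd h2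
    have h5 : ((m + l - 1) - (m + k - 1) : ℤ) = 0 := by
      apply Int.eq_zero_of_abs_lt_dvd h4
      rw [abs_lt]
      constructor <;> omega
    omega

/-- There is a subset `J ⊆ {1, …, N}` with at least `N − Ev(N)/2` elements such that
`|a − ρ_N^j·s|² ≥ |a|² + |s|²` for every `j ∈ J`; in particular
`|a − ρ_N^j·s| ≥ max{|a|, |s|, |a−s|/√2}` for every `j ∈ J`. -/
theorem stmt7 (N : ℕ) (hN : 2 ≤ N) (a s : ℂ) :
    ∃ J : Finset ℕ, J ⊆ Finset.Icc 1 N ∧ N - Ev N / 2 ≤ J.card ∧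
      (∀ j ∈ J, ‖a‖ ^ 2 + ‖s‖ ^ 2 ≤
        ‖a - rhoN N ^ j * s‖ ^ 2) ∧
      (∀ j ∈ J, max (max ‖a‖ ‖s‖)
        (‖a - s‖ / Real.sqrt 2) ≤ ‖a - rhoN N ^ j * s‖) := by
  have hcard := cos_count N hN (Complex.arg (s * (starRingEnd ℂ) a))
  have main : ∀ j ∈ (Finset.Icc 1 N).filter (fun j : ℕ =>
      Real.cos (Complex.arg (s * (starRingEnd ℂ) a) + 2 * Real.pi * j / N) ≤ 0),
      ‖a‖ ^ 2 + ‖s‖ ^ 2 ≤ ‖a - rhoN N ^ j * s‖ ^ 2 := by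
    intro j hj
    rw [rhoN_norm_sq]
    have h := mul_nonpos_of_nonneg_of_nonpos (norm_nonneg (s * (starRingEnd ℂ) a))
      (Finset.mem_filter.1 hj).2
    linarith
  refine ⟨_, Finset.filter_subset _ _, le_trans ?_ hcard, main, ?_⟩
  · unfold Ev
    split_ifs <;> omega
  · intro j hj
    have h := main j hj
    refine max_le (max_le ?_ ?_) ?_
    · exact le_of_sq_le_of_nn (by nlinarith [sq_nonneg ‖s‖]) (norm_nonneg _)
    · exact le_of_sq_le_of_nn (by nlinarith [sq_nonneg ‖a‖]) (norm_nonneg _)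
    · refine le_of_sq_le_of_nn ?_ (norm_nonneg _)
      rw [div_pow, Real.sq_sqrt (by norm_num)]
      have h1 := norm_sub_le a s
      have h2 : ‖a - s‖ ^ 2 ≤ (‖a‖ + ‖s‖) ^ 2 := by gcongr
      nlinarith [sq_nonneg (‖a‖ - ‖s‖)]
end
end

section
/- Let N ≥ 2 be a natural number, R > 0, and let z, ζ ∈ ℂ² satisfy ‖z‖ ≤ R, ‖ζ‖ ≤ R, and ‖z−φ_k(ζ)‖_∞ ≥ ‖z−ζ‖_∞ for every k = 1, …, N. Then ‖π_N(z)−π_N(ζ)‖ ≥ (‖z−ζ‖^N / (√8)^N) · min{ 1/(3R^{N−2}) , 1 }. -/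
open Complex

noncomputable section

theorem aux_prod (N : ℕ) (hN : 2 ≤ N) (x y : ℂ) (t : ℝ) (ht : 0 ≤ t)
    (h : ∀ w : ℂ, w ^ N = 1 → t ≤ ‖x - w * y‖) : t ^ N ≤ ‖x ^ N - y ^ N‖ := by
  have hp := Complex.isPrimitiveRoot_exp N (by omega)
  rw [hp.pow_sub_pow_eq_prod_sub_mul x y (by omega), norm_prod]
  calc t ^ N = ∏ w ∈ Polynomial.nthRootsFinset N (1 : ℂ), t := by
        rw [Finset.prod_const, hp.card_nthRootsFinset]
    _ ≤ _ := by
        apply Finset.prod_le_prod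
        · intros; exact ht
        · intro w hw
          exact h w ((Polynomial.mem_nthRootsFinset (by omega) _).1 hw)

theorem aux_key (a b c d u v : ℂ) (D : ℝ) (hu : ‖u‖ = 1) (hv : ‖v‖ = 1) (hD : 0 < D)
    (h1 : ‖a - u * c‖ ≤ D / 2) (h2 : D ≤ ‖b - u⁻¹ * d‖)
    (h3 : ‖b - v⁻¹ * d‖ ≤ D / 2) (h4 : D ≤ ‖a - v * c‖) :
    (D / 2) ^ 2 ≤ ‖a * b - c * d‖ := by
  have hu0 : u ≠ 0 := by rintro rfl; simp at hu
  have hv0 : v ≠ 0 := by rintro rfl; simp at hv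
  have gen : ∀ p q r s m : ℂ, p * q = m + r * s → D ≤ ‖q‖ → ‖s‖ ≤ D / 2 →
      ‖p‖ * D ≤ ‖m‖ + ‖r‖ * (D / 2) := by
    intro p q r s m e hq hs
    calc ‖p‖ * D ≤ ‖p‖ * ‖q‖ := by gcongr
      _ = ‖m + r * s‖ := by rw [← norm_mul, e]
      _ ≤ ‖m‖ + ‖r * s‖ := norm_add_le _ _
      _ ≤ _ := by rw [norm_mul]; gcongr
  have e1 := gen d (a - v * c) (-(a * v)) (b - v⁻¹ * d) (v * (a * b - c * d))
    (by field_simp; ring) h4 h3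
  have e2 := gen b (a - v * c) (-(v * c)) (b - v⁻¹ * d) (a * b - c * d)
    (by field_simp; ring) h4 h3
  have e3 := gen a (b - u⁻¹ * d) (-(u⁻¹ * d)) (a - u * c) (a * b - c * d)
    (by field_simp; ring) h2 h1
  have e4 := gen c (b - u⁻¹ * d) (-(u⁻¹ * b)) (a - u * c) (u⁻¹ * (a * b - c * d))
    (by field_simp; ring) h2 h1
  simp only [norm_neg, norm_mul, norm_inv, hu, hv, inv_one, one_mul, mul_one] at e1 e2 e3 e4
  have f1 : D ≤ ‖a‖ + ‖c‖ := by
    have := norm_sub_le a (v * c)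
    rw [norm_mul, hv, one_mul] at this; linarith
  have f2 : D ≤ ‖b‖ + ‖d‖ := by
    have := norm_sub_le b (u⁻¹ * d)
    rw [norm_mul, norm_inv, hu, inv_one, one_mul] at this; linarith
  nlinarith

theorem aux_max (N : ℕ) (hN : 2 ≤ N) (R : ℝ) (hR : 0 < R) (a b c d : ℂ) (D : ℝ) (hD : 0 ≤ D)
    (hDR : D / 2 ≤ R)
    (h : ∀ w : ℂ, w ^ N = 1 → D ≤ ‖a - w * c‖ ∨ D ≤ ‖b - w⁻¹ * d‖)
    (T : ℝ) (t1 : ‖a ^ N - c ^ N‖ ≤ T) (t2 : ‖b ^ N - d ^ N‖ ≤ T) (t3 : ‖a * b - c * d‖ ≤ T) :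
    (D / 2) ^ N * min (1 / (3 * R ^ (N - 2))) 1 ≤ T := by
  have hle : (D / 2) ^ N * min (1 / (3 * R ^ (N - 2))) 1 ≤ (D / 2) ^ N :=
    mul_le_of_le_one_right (by positivity) (min_le_right _ _)
  by_cases ha : ∀ w : ℂ, w ^ N = 1 → D / 2 ≤ ‖a - w * c‖
  · have := aux_prod N hN a c (D / 2) (by positivity) ha
    linarith
  by_cases hb : ∀ w : ℂ, w ^ N = 1 → D / 2 ≤ ‖b - w * d‖
  · have := aux_prod N hN b d (D / 2) (by positivity) hb
    linarith
  push Not at ha hb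
  obtain ⟨u, hu, ha⟩ := ha
  obtain ⟨v, hv, hb⟩ := hb
  have hv' : v⁻¹ ^ N = 1 := by rw [inv_pow, hv, inv_one]
  have hDpos : 0 < D := by have := norm_nonneg (a - u * c); linarith
  have key := aux_key a b c d u v⁻¹ D (Complex.norm_eq_one_of_pow_eq_one hu (by omega))
    (Complex.norm_eq_one_of_pow_eq_one hv' (by omega)) hDpos ha.le
    ((h u hu).resolve_left (by linarith)) (by rw [inv_inv]; exact hb.le)
    ((h _ hv').resolve_right (by rw [inv_inv]; linarith))
  calc _ ≤ (D / 2) ^ N * (1 / (3 * R ^ (N - 2))) := by gcongr; exact min_le_left _ _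
    _ = (D / 2) ^ 2 * (D / 2) ^ (N - 2) * (1 / (3 * R ^ (N - 2))) := by
        rw [← pow_add]; congr 3; omega
    _ ≤ (D / 2) ^ 2 * R ^ (N - 2) * (1 / (3 * R ^ (N - 2))) := by gcongr
    _ = (D / 2) ^ 2 / 3 := by field_simp
    _ ≤ T := by have := sq_nonneg (D / 2); linarith

/-- If `‖z‖ ≤ R`, `‖ζ‖ ≤ R` and `‖z−φ_k(ζ)‖_∞ ≥ ‖z−ζ‖_∞` for every `k = 1, …, N`, then
`‖π_N(z)−π_N(ζ)‖ ≥ (‖z−ζ‖^N/(√8)^N)·min{1/(3R^{N−2}), 1}`. -/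
theorem stmt8 (N : ℕ) (hN : 2 ≤ N) (R : ℝ) (hR : 0 < R)
    (z ζ : EuclideanSpace ℂ (Fin 2)) (hz : ‖z‖ ≤ R) (hζ : ‖ζ‖ ≤ R)
    (h : ∀ k : ℕ, 1 ≤ k → k ≤ N → supDist z (phiN N k ζ) ≥ supDist z ζ) :
    ‖piN N z - piN N ζ‖ ≥
      ‖z - ζ‖ ^ N / Real.sqrt 8 ^ N * min (1 / (3 * R ^ (N - 2))) 1 := by
  have hn2 : ∀ (x : EuclideanSpace ℂ (Fin 2)) (i : Fin 2), ‖x i‖ ≤ ‖x‖ :=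
    fun x i => PiLp.norm_apply_le x i
  have hn3 : ∀ i : Fin 3, ‖(piN N z - piN N ζ) i‖ ≤ ‖piN N z - piN N ζ‖ :=
    fun i => PiLp.norm_apply_le _ i
  have hD0 : 0 ≤ supDist z ζ := le_max_of_le_left (norm_nonneg _)
  have hDR : supDist z ζ / 2 ≤ R := by
    have : supDist z ζ ≤ R + R := max_le
      ((norm_sub_le _ _).trans (add_le_add ((hn2 z 0).trans hz) ((hn2 ζ 0).trans hζ)))
      ((norm_sub_le _ _).trans (add_le_add ((hn2 z 1).trans hz) ((hn2 ζ 1).trans hζ)))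
    linarith
  have hmain := aux_max N hN R hR (z 0) (z 1) (ζ 0) (ζ 1) (supDist z ζ) hD0 hDR
    (by
      intro w hw
      have hp : IsPrimitiveRoot (rhoN N) N := Complex.isPrimitiveRoot_exp N (by omega)
      haveI : NeZero N := ⟨by omega⟩
      obtain ⟨i, hi, rfl⟩ := hp.eq_pow_of_pow_eq_one hw
      have key : ∃ k : ℕ, 1 ≤ k ∧ k ≤ N ∧ rhoN N ^ k = rhoN N ^ i := by
        rcases Nat.eq_zero_or_pos i with rfl | h0
        · exact ⟨N, by omega, le_rfl, by rw [hp.pow_eq_one, pow_zero]⟩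
        · exact ⟨i, h0, hi.le, rfl⟩
      obtain ⟨k, k1, k2, hk⟩ := key
      have := h k k1 k2
      rw [← hk]
      rw [ge_iff_le] at this
      conv at this => rhs; unfold supDist
      simpa [phiN, mk2, le_max_iff] using this)
    ‖piN N z - piN N ζ‖
    (by simpa [piN, mk3] using hn3 0) (by simpa [piN, mk3] using hn3 1)
    (by simpa [piN, mk3] using hn3 2)
  refine le_trans ?_ hmain
  rw [← div_pow]
  have hmin : 0 ≤ min (1 / (3 * R ^ (N - 2))) (1 : ℝ) := by positivity
  have h8 : 0 < Real.sqrt 8 := by positivity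
  have hs : ‖z - ζ‖ / Real.sqrt 8 ≤ supDist z ζ / 2 := by
    rw [div_le_iff₀ h8]
    refine (pow_le_pow_iff_left₀ (norm_nonneg _) (by positivity) two_ne_zero).1 ?_ 
    rw [mul_pow, Real.sq_sqrt (by norm_num), EuclideanSpace.norm_sq_eq, Fin.sum_univ_two]
    have m1 : ‖z 0 - ζ 0‖ ≤ supDist z ζ := le_max_left _ _
    have m2 : ‖z 1 - ζ 1‖ ≤ supDist z ζ := le_max_right _ _
    have m1' := pow_le_pow_left₀ (norm_nonneg _) m1 2
    have m2' := pow_le_pow_left₀ (norm_nonneg _) m2 2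
    simp only [PiLp.sub_apply]
    nlinarith
  gcongr
end
end

section
/- Let N ≥ 2 be a natural number and let G : ℂ² → ℂ be a continuous function satisfying G(φ_k(z)) = G(z) for every z ∈ ℂ² and every k ∈ {1, …, N}. Then there exists a continuous function f : X_N → ℂ (where X_N ⊂ ℂ³ carries the subspace topology) such that f(π_N(z)) = G(z) for all z ∈ ℂ². -/
open Complex

noncomputable section

/-- `X_N = {x ∈ ℂ³ : x₁x₂ = x₃^N}`, with the subspace topology. -/
def XN (N : ℕ) : Set (EuclideanSpace ℂ (Fin 3)) := {x | x 0 * x 1 = x 2 ^ N}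

theorem rho_root (N : ℕ) (hN : 2 ≤ N) (ζ : ℂ) (h : ζ ^ N = 1) :
    ∃ k : ℕ, 1 ≤ k ∧ k ≤ N ∧ rhoN N ^ k = ζ := by
  have hp : IsPrimitiveRoot (rhoN N) N := Complex.isPrimitiveRoot_exp N (by omega)
  have : NeZero N := ⟨by omega⟩
  obtain ⟨i, hi, rfl⟩ := hp.eq_pow_of_pow_eq_one h
  rcases Nat.eq_zero_or_pos i with rfl | h0
  · exact ⟨N, by omega, le_rfl, by simp [hp.pow_eq_one]⟩
  · exact ⟨i, h0, hi.le, rfl⟩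

theorem piN_fiber (N : ℕ) (hN : 2 ≤ N) (z w : EuclideanSpace ℂ (Fin 2))
    (h : piN N z = piN N w) : ∃ k : ℕ, 1 ≤ k ∧ k ≤ N ∧ phiN N k z = w := by
  have h0 : z 0 ^ N = w 0 ^ N := by simpa [piN, mk3] using congrArg (fun v => v 0) h
  have h1 : z 1 ^ N = w 1 ^ N := by simpa [piN, mk3] using congrArg (fun v => v 1) h
  have h2 : z 0 * z 1 = w 0 * w 1 := by simpa [piN, mk3] using congrArg (fun v => v 2) h
  have hN0 : N ≠ 0 := by omega
  have key : ∀ k : ℕ, rhoN N ^ k * z 0 = w 0 → (rhoN N ^ k)⁻¹ * z 1 = w 1 →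
      phiN N k z = w := by
    intro k a b
    ext i
    fin_cases i
    · simpa [phiN, mk2] using a
    · simpa [phiN, mk2] using b
  by_cases hz : z 0 = 0
  · have hw : w 0 = 0 := by
      rw [hz, zero_pow hN0] at h0
      exact pow_eq_zero_iff hN0 |>.1 h0.symm
    by_cases hz1 : w 1 = 0
    · have hw1 : z 1 = 0 := by
        rw [hz1, zero_pow hN0] at h1
        exact pow_eq_zero_iff hN0 |>.1 h1
      exact ⟨N, by omega, le_rfl, key N (by simp [hz, hw]) (by simp [hz1, hw1])⟩
    · obtain ⟨k, a, b, c⟩ := rho_root N hN (z 1 / w 1) (by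
        rw [div_pow, h1, div_self (pow_ne_zero _ hz1)])
      have hz2 : z 1 ≠ 0 := by
        intro h'
        rw [h', zero_pow hN0] at h1
        exact hz1 (pow_eq_zero_iff hN0 |>.1 h1.symm)
      refine ⟨k, a, b, key k (by simp [hz, hw]) ?_⟩
      rw [c]
      field_simp
  · have hw : w 0 ≠ 0 := by
      intro h'
      rw [h', zero_pow hN0] at h0
      exact hz (pow_eq_zero_iff hN0 |>.1 h0)
    obtain ⟨k, a, b, c⟩ := rho_root N hN (w 0 / z 0) (by
      rw [div_pow, h0, div_self (pow_ne_zero _ hw)])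
    refine ⟨k, a, b, key k ?_ ?_⟩
    · rw [c]
      field_simp
    · rw [c]
      field_simp
      linear_combination h2

theorem piN_cont (N : ℕ) : Continuous (piN N) := by
  unfold piN mk3
  refine (PiLp.continuous_toLp 2 _).comp ?_
  refine continuous_pi fun i => ?_
  fin_cases i <;> simp <;> fun_prop

theorem piN_closed (N : ℕ) (hN : 2 ≤ N) : IsClosedMap (piN N) := by
  refine IsProperMap.isClosedMap ?_
  rw [isProperMap_iff_isCompact_preimage]
  refine ⟨piN_cont N, fun K hK => ?_⟩
  refine Metric.isCompact_of_isClosed_isBounded (hK.isClosed.preimage (piN_cont N)) ?_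
  obtain ⟨C, hC⟩ := hK.isBounded.exists_norm_le
  have aux : ∀ x : ℝ, 0 ≤ x → x ≤ 1 + x ^ N := by
    intro x hx
    rcases le_total x 1 with h | h
    · have := pow_nonneg hx N
      linarith
    · have := le_self_pow₀ h (show N ≠ 0 by omega)
      linarith
  refine isBounded_iff_forall_norm_le.2 ⟨(1 + C) + (1 + C), fun z hz => ?_⟩
  have hz' := hC _ hz
  have b0 : ‖z 0‖ ≤ 1 + C := by
    have := (PiLp.norm_apply_le (piN N z) 0).trans hz'
    have e : (piN N z) 0 = z 0 ^ N := by simp [piN, mk3]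
    rw [e, norm_pow] at this
    linarith [aux _ (norm_nonneg (z 0))]
  have b1 : ‖z 1‖ ≤ 1 + C := by
    have := (PiLp.norm_apply_le (piN N z) 1).trans hz'
    have e : (piN N z) 1 = z 1 ^ N := by simp [piN, mk3]
    rw [e, norm_pow] at this
    linarith [aux _ (norm_nonneg (z 1))]
  rw [EuclideanSpace.norm_eq, Fin.sum_univ_two]
  refine Real.sqrt_le_iff.2 ⟨?_, ?_⟩
  · linarith [norm_nonneg (z 0), norm_nonneg (z 1)]
  · nlinarith [norm_nonneg (z 0), norm_nonneg (z 1)]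

theorem piN_surj (N : ℕ) (hN : 2 ≤ N) (x : EuclideanSpace ℂ (Fin 3)) (hx : x ∈ XN N) :
    ∃ z, piN N z = x := by
  have hN0 : N ≠ 0 := by omega
  have hx' : x 0 * x 1 = x 2 ^ N := hx
  have key : ∀ a b : ℂ, a ^ N = x 0 → b ^ N = x 1 → a * b = x 2 → ∃ z, piN N z = x := by
    intro a b h0 h1 h2
    refine ⟨mk2 a b, ?_⟩
    ext i
    fin_cases i
    · simpa [piN, mk2, mk3] using h0
    · simpa [piN, mk2, mk3] using h1
    · simpa [piN, mk2, mk3] using h2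
  obtain ⟨a, ha⟩ := IsAlgClosed.exists_pow_nat_eq (x 0) (show 0 < N by omega)
  by_cases h : a = 0
  · obtain ⟨b, hb⟩ := IsAlgClosed.exists_pow_nat_eq (x 1) (show 0 < N by omega)
    refine key a b ha hb ?_
    rw [h, zero_pow hN0] at ha
    rw [← ha, zero_mul] at hx'
    rw [h, zero_mul, pow_eq_zero_iff hN0 |>.1 hx'.symm]
  · refine key a (x 2 / a) ha ?_ (by field_simp)
    rw [div_pow, ← hx', ha]
    have : x 0 ≠ 0 := ha ▸ pow_ne_zero _ h
    field_simp

theorem piN_mem (N : ℕ) (z : EuclideanSpace ℂ (Fin 2)) : piN N z ∈ XN N := by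
  simp [XN, piN, mk3, mul_pow]

/-- A continuous `G : ℂ² → ℂ` invariant under all `φ_k`, `k = 1, …, N`, descends to a
continuous function `f` on `X_N` with `f ∘ π_N = G`. -/
theorem stmt11 (N : ℕ) (hN : 2 ≤ N) (G : EuclideanSpace ℂ (Fin 2) → ℂ)
    (hGc : Continuous G)
    (hGi : ∀ z : EuclideanSpace ℂ (Fin 2), ∀ k : ℕ, 1 ≤ k → k ≤ N → G (phiN N k z) = G z) :
    ∃ f : XN N → ℂ, Continuous f ∧
      ∀ z : EuclideanSpace ℂ (Fin 2), ∀ hz : piN N z ∈ XN N, f ⟨piN N z, hz⟩ = G z := by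
  let p : EuclideanSpace ℂ (Fin 2) → XN N := fun z => ⟨piN N z, piN_mem N z⟩
  have pc : Continuous p := (piN_cont N).subtype_mk _
  have ps : Function.Surjective p := by
    rintro ⟨x, hx⟩
    obtain ⟨z, hz⟩ := piN_surj N hN x hx
    exact ⟨z, Subtype.ext hz⟩
  have pcl : IsClosedMap p := by
    intro S hS
    have e : p '' S = Subtype.val ⁻¹' (piN N '' S) := by
      ext y
      constructor
      · rintro ⟨z, hz, rfl⟩
        exact ⟨z, hz, rfl⟩
      · rintro ⟨z, hz, h⟩
        exact ⟨z, hz, Subtype.ext h⟩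
    rw [e]
    exact (piN_closed N hN S hS).preimage continuous_subtype_val
  have pq := pcl.isQuotientMap pc ps
  have hf : ∀ z, G (Function.surjInv ps (p z)) = G z := by
    intro z
    have h1 : p (Function.surjInv ps (p z)) = p z := Function.surjInv_eq ps _
    obtain ⟨k, a, b, c⟩ := piN_fiber N hN _ _ (congrArg Subtype.val h1)
    exact (hGi _ k a b).symm.trans (congrArg G c)
  refine ⟨fun x => G (Function.surjInv ps x), ?_, fun z _ => hf z⟩
  rw [pq.continuous_iff]
  exact hGc.congr fun z => (hf z).symm
end
end

section
/- Let N ≥ 2 be a natural number and let x, w ∈ ℂ³ both satisfy the equation of X_{2N} (i.e. x₁x₂ = x₃^{2N} and w₁w₂ = w₃^{2N}). Then η₂(x) = η₂(w) if and only if w = x or w = Px. -/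
open Complex

noncomputable section

/-- `η₂(x₁, x₂, x₃) = ((x₁+x₂)/2, x₃(x₁−x₂)/(2i), x₃²)`. -/
def eta2 (x : EuclideanSpace ℂ (Fin 3)) : EuclideanSpace ℂ (Fin 3) :=
  mk3 ((x 0 + x 1) / 2) (x 2 * (x 0 - x 1) / (2 * Complex.I)) (x 2 ^ 2)

/-- `P(x₁, x₂, x₃) = (x₂, x₁, −x₃)`. -/
def Pmap (x : EuclideanSpace ℂ (Fin 3)) : EuclideanSpace ℂ (Fin 3) :=
  mk3 (x 1) (x 0) (-(x 2))

/-- For `x, w` on `X_{2N}`, `η₂(x) = η₂(w)` iff `w = x` or `w = Px`. -/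
theorem stmt13 (N : ℕ) (hN : 2 ≤ N) (x w : EuclideanSpace ℂ (Fin 3))
    (hx : x 0 * x 1 = x 2 ^ (2 * N)) (hw : w 0 * w 1 = w 2 ^ (2 * N)) :
    eta2 x = eta2 w ↔ (w = x ∨ w = Pmap x) := by
  have key : ∀ a b c a' b' c' : ℂ, mk3 a b c = mk3 a' b' c' ↔ (a = a' ∧ b = b' ∧ c = c') := by
    intro a b c a' b' c'
    simp [mk3]
  have e : ∀ y : EuclideanSpace ℂ (Fin 3), y = mk3 (y 0) (y 1) (y 2) := by
    intro y
    ext i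
    fin_cases i <;> simp [mk3]
  have h1 : w = x ↔ (w 0 = x 0 ∧ w 1 = x 1 ∧ w 2 = x 2) := by
    conv_lhs => rw [e w, e x]
    exact key _ _ _ _ _ _
  have h2 : w = Pmap x ↔ (w 0 = x 1 ∧ w 1 = x 0 ∧ w 2 = -(x 2)) := by
    conv_lhs => rw [e w]
    exact key _ _ _ _ _ _
  rw [h1, h2]
  unfold eta2
  rw [key]
  generalize x 0 = a at *
  generalize x 1 = b at *
  generalize x 2 = c at *
  generalize w 0 = p at *
  generalize w 1 = q at *
  generalize w 2 = r at *
  have hI : (2 * Complex.I) ≠ 0 := by simp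
  constructor
  · rintro ⟨s, d, t⟩
    have s' : a + b = p + q := by linear_combination 2 * s
    have d' : c * (a - b) = r * (p - q) := by
      field_simp at d
      linear_combination d
    by_cases hc : c = 0
    · have hr : r = 0 := by
        rw [hc] at t
        have : r ^ 2 = 0 := by rw [← t]; simp
        exact pow_eq_zero_iff (two_ne_zero) |>.1 this
      have hn : 2 * N ≠ 0 := by omega
      rw [hc, zero_pow hn] at hx
      rw [hr, zero_pow hn] at hw
      have : (p - a) * (p - b) = 0 := by linear_combination hx - hw - p * s'
      rcases mul_eq_zero.1 this with h | h
      · left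
        exact ⟨by linear_combination h, by linear_combination -s' - h, by rw [hc, hr]⟩
      · right
        exact ⟨by linear_combination h, by linear_combination -s' - h, by rw [hc, hr]; simp⟩
    · rcases sq_eq_sq_iff_eq_or_eq_neg.1 t.symm with h | h
      · left
        rw [h] at d'
        have := mul_left_cancel₀ hc d'
        exact ⟨by linear_combination -(s' + this) / 2, by linear_combination (this - s') / 2, h⟩
      · right
        rw [h] at d'
        have : a - b = q - p := mul_left_cancel₀ hc (by linear_combination d')
        exact ⟨by linear_combination (this - s') / 2, by linear_combination -(s' + this) / 2, h⟩
  · rintro (⟨rfl, rfl, rfl⟩ | ⟨rfl, rfl, rfl⟩)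
    · simp
    · exact ⟨by ring, by ring, by ring⟩
end
end

section
/- Let N ≥ 2 be a natural number and ρ > 0. Let a, b, c, s, t, u be complex numbers all of absolute value at most ρ, satisfying a² + b² = c^{2N} and s² + t² = u^{2N}, and suppose that |b² − t²| ≥ 3·ρ^{2N−2}·N·|c² − u²|. Then |b² − t²| ≤ 3ρ·|a − s|; equivalently, (2/3)|b² − t²| ≤ |a² − s²|. -/
theorem norm_pow_sub_pow_le_aux (x y : ℂ) (R : ℝ) (hR : 0 ≤ R) (hx : ‖x‖ ≤ R) (hy : ‖y‖ ≤ R)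
    (n : ℕ) : ‖x ^ (n + 1) - y ^ (n + 1)‖ ≤ (n + 1 : ℝ) * R ^ n * ‖x - y‖ := by
  induction n with
  | zero => simp
  | succ k ih =>
    have e : x ^ (k + 1 + 1) - y ^ (k + 1 + 1)
        = x * (x ^ (k + 1) - y ^ (k + 1)) + y ^ (k + 1) * (x - y) := by ring
    have h1 : ‖x * (x ^ (k + 1) - y ^ (k + 1))‖ ≤ R * ((k + 1 : ℝ) * R ^ k * ‖x - y‖) := by
      rw [norm_mul]
      exact mul_le_mul hx ih (norm_nonneg _) hR
    have h2 : ‖y ^ (k + 1) * (x - y)‖ ≤ R ^ (k + 1) * ‖x - y‖ := by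
      rw [norm_mul, norm_pow]
      gcongr
    rw [e]
    refine (norm_add_le _ _).trans ((add_le_add h1 h2).trans (le_of_eq ?_))
    push_cast
    ring

/-- Let `a, b, c, s, t, u` be complex numbers of absolute value at most `ρ`, with
`a² + b² = c^{2N}`, `s² + t² = u^{2N}` and `|b² − t²| ≥ 3ρ^{2N−2}N|c² − u²|`. Then
`|b² − t²| ≤ 3ρ|a − s|`; equivalently `(2/3)|b² − t²| ≤ |a² − s²|`. -/
theorem stmt16 (N : ℕ) (hN : 2 ≤ N) (ρ : ℝ) (hρ : 0 < ρ) (a b c s t u : ℂ)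
    (ha : ‖a‖ ≤ ρ) (hb : ‖b‖ ≤ ρ) (hc : ‖c‖ ≤ ρ)
    (hs : ‖s‖ ≤ ρ) (ht : ‖t‖ ≤ ρ) (hu : ‖u‖ ≤ ρ)
    (hx : a ^ 2 + b ^ 2 = c ^ (2 * N)) (hw : s ^ 2 + t ^ 2 = u ^ (2 * N))
    (hbig : ‖b ^ 2 - t ^ 2‖ ≥
      3 * ρ ^ (2 * N - 2) * N * ‖c ^ 2 - u ^ 2‖) :
    ‖b ^ 2 - t ^ 2‖ ≤ 3 * ρ * ‖a - s‖ ∧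
    2 / 3 * ‖b ^ 2 - t ^ 2‖ ≤ ‖a ^ 2 - s ^ 2‖ := by
  obtain ⟨n, rfl⟩ : ∃ n, N = n + 1 := ⟨N - 1, by omega⟩
  have hc2 : ‖c ^ 2‖ ≤ ρ ^ 2 := by rw [norm_pow]; gcongr
  have hu2 : ‖u ^ 2‖ ≤ ρ ^ 2 := by rw [norm_pow]; gcongr
  have h := norm_pow_sub_pow_le_aux (c ^ 2) (u ^ 2) (ρ ^ 2) (by positivity) hc2 hu2 n
  rw [← pow_mul, ← pow_mul, ← pow_mul, ← hx, ← hw] at h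
  have e2 : 2 * (n + 1) - 2 = 2 * n := by omega
  rw [e2] at hbig
  push_cast at hbig
  have e : b ^ 2 - t ^ 2 = (a ^ 2 + b ^ 2 - (s ^ 2 + t ^ 2)) - (a ^ 2 - s ^ 2) := by ring
  have h3 : ‖b ^ 2 - t ^ 2‖ ≤ ‖a ^ 2 + b ^ 2 - (s ^ 2 + t ^ 2)‖ + ‖a ^ 2 - s ^ 2‖ := by
    conv_lhs => rw [e]
    exact norm_sub_le _ _
  have h4 : 2 / 3 * ‖b ^ 2 - t ^ 2‖ ≤ ‖a ^ 2 - s ^ 2‖ := by linarith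
  have h5 : ‖a ^ 2 - s ^ 2‖ ≤ 2 * ρ * ‖a - s‖ := by
    have e3 : a ^ 2 - s ^ 2 = (a + s) * (a - s) := by ring
    rw [e3, norm_mul]
    have : ‖a + s‖ ≤ 2 * ρ := (norm_add_le _ _).trans (by linarith)
    gcongr
  exact ⟨by linarith, h4⟩
end
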